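/- arXiv:2411.01888 — 4 statements merged into one kernel-verified Lean document; each statement's English description precedes it below -/
import Mathlib

section
/- For all natural numbers m ≥ 2 and l ≥ 2, one has Γ(l/2 + (m−1)/2) / (Γ((m−1)/2) · Γ(l/2 + 1)) ≤ 2^5 · (l+m−2)^m. -/
/-!
Since `log Γ` is convex on the positive half-line, `a ↦ Γ(x + a) / Γ(a)` is nondecreasing for
`x ≥ 0`. So `a` may be rounded up to `⌊a⌋ + 1`, and `⌊a⌋` applications of `Γ(s + 1) = s Γ(s)`, each
contributing a factor `1 + x / k ≤ 1 + x`, bring the quotient down to `Γ(x + 1) / Γ(1)`. Hence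
`Γ(x + a) / (Γ(a) Γ(x + 1)) ≤ (1 + x) ^ ⌊a⌋`.
-/

open Real Set

theorem convexOn_map_add_map_le_of_mem_segment {𝕜 E β : Type*} [Semiring 𝕜] [PartialOrder 𝕜]
    [AddCommGroup E] [Module 𝕜 E] [AddCommMonoid β] [PartialOrder β] [IsOrderedAddMonoid β]
    [Module 𝕜 β] {s : Set E} {f : E → β} (hf : ConvexOn 𝕜 s f) {x y z : E} (hx : x ∈ s)
    (hz : z ∈ s) (hy : y ∈ segment 𝕜 x z) : f y + f (x + z - y) ≤ f x + f z := by
  obtain ⟨a, b, ha, hb, hab, rfl⟩ := hy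
  have hba : b + a = 1 := by rw [add_comm, hab]
  have hreflect : x + z - (a • x + b • z) = b • x + a • z := by
    rw [sub_eq_iff_eq_add]
    calc x + z = (b + a) • x + (a + b) • z := by rw [hab, hba, one_smul, one_smul]
      _ = b • x + a • z + (a • x + b • z) := by simp only [add_smul]; abel
  calc f (a • x + b • z) + f (x + z - (a • x + b • z))
      ≤ (a • f x + b • f z) + (b • f x + a • f z) := by
        rw [hreflect]
        exact add_le_add (hf.2 hx hz ha hb hab) (hf.2 hx hz hb ha hba)
    _ = (a + b) • f x + (b + a) • f z := by simp only [add_smul]; abel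
    _ = f x + f z := by rw [hab, hba, one_smul, one_smul]

theorem monotoneOn_Gamma_add_div_Gamma {x : ℝ} (hx : 0 ≤ x) :
    MonotoneOn (fun a ↦ Gamma (x + a) / Gamma a) (Ioi 0) := by
  intro a (ha : 0 < a) b (hb : 0 < b) hab
  have hxb : 0 < x + b := by positivity
  have hb_mem : b ∈ segment ℝ a (x + b) := by
    rw [segment_eq_Icc (by linarith)]
    exact ⟨hab, by linarith⟩
  have hlog := convexOn_map_add_map_le_of_mem_segment convexOn_log_Gamma ha hxb hb_mem
  have hmul : Gamma b * Gamma (x + a) ≤ Gamma a * Gamma (x + b) := by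
    rw [← log_le_log_iff (by positivity) (by positivity), log_mul (by positivity) (by positivity),
      log_mul (by positivity) (by positivity)]
    rwa [show a + (x + b) - b = x + a by ring] at hlog
  rw [div_le_div_iff₀ (by positivity) (by positivity)]
  linarith

theorem Gamma_add_div_Gamma_add_one {a x : ℝ} (ha : a ≠ 0) (hxa : x + a ≠ 0) :
    Gamma (x + (a + 1)) / Gamma (a + 1) = (1 + x / a) * (Gamma (x + a) / Gamma a) := by
  rw [← add_assoc, Gamma_add_one hxa, Gamma_add_one ha, mul_div_mul_comm, add_comm x a, add_div,
    div_self ha]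

theorem Gamma_add_nat_div_Gamma_le {a x : ℝ} (ha : 0 < a) (hx : 0 ≤ x) (n : ℕ) :
    Gamma (x + (a + n)) / Gamma (a + n) ≤ (1 + x / a) ^ n * (Gamma (x + a) / Gamma a) := by
  induction n with
  | zero => simp
  | succ n ih =>
    calc Gamma (x + (a + (n + 1 : ℕ))) / Gamma (a + (n + 1 : ℕ))
        = (1 + x / (a + n)) * (Gamma (x + (a + n)) / Gamma (a + n)) := by
          rw [Nat.cast_succ, ← add_assoc a]
          exact Gamma_add_div_Gamma_add_one (by positivity) (by positivity)
      _ ≤ (1 + x / a) * ((1 + x / a) ^ n * (Gamma (x + a) / Gamma a)) := by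
          gcongr
          exact le_add_of_nonneg_right n.cast_nonneg
      _ = (1 + x / a) ^ (n + 1) * (Gamma (x + a) / Gamma a) := by ring

theorem Gamma_add_div_Gamma_mul_Gamma_le_pow_floor {a x : ℝ} (ha : 0 < a) (hx : 0 ≤ x) :
    Gamma (x + a) / (Gamma a * Gamma (x + 1)) ≤ (1 + x) ^ ⌊a⌋₊ := by
  have hround : a ≤ 1 + ⌊a⌋₊ := by linarith [Nat.lt_floor_add_one a]
  have hratio : Gamma (x + a) / Gamma a ≤ (1 + x) ^ ⌊a⌋₊ * Gamma (x + 1) :=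
    calc Gamma (x + a) / Gamma a
        ≤ Gamma (x + (1 + ⌊a⌋₊)) / Gamma (1 + ⌊a⌋₊) :=
          monotoneOn_Gamma_add_div_Gamma hx ha (ha.trans_le hround) hround
      _ ≤ (1 + x) ^ ⌊a⌋₊ * Gamma (x + 1) := by
          simpa only [div_one, Gamma_one] using Gamma_add_nat_div_Gamma_le one_pos hx ⌊a⌋₊
  rwa [← div_div, div_le_iff₀ (by positivity)]

theorem gamma_ratio_bound_general {m l : ℝ} (hm : 2 ≤ m) (hl : 2 ≤ l) :
    Gamma (l / 2 + (m - 1) / 2) / (Gamma ((m - 1) / 2) * Gamma (l / 2 + 1))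
      ≤ 2 ^ 5 * (l + m - 2) ^ m := by
  have hfloor : (⌊(m - 1) / 2⌋₊ : ℝ) ≤ m := (Nat.floor_le (by linarith)).trans (by linarith)
  calc Gamma (l / 2 + (m - 1) / 2) / (Gamma ((m - 1) / 2) * Gamma (l / 2 + 1))
      ≤ (1 + l / 2) ^ ⌊(m - 1) / 2⌋₊ :=
        Gamma_add_div_Gamma_mul_Gamma_le_pow_floor (by linarith) (by linarith)
    _ ≤ (l + m - 2) ^ ⌊(m - 1) / 2⌋₊ := by gcongr; linarith
    _ ≤ (l + m - 2) ^ m := by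
        rw [← rpow_natCast]
        exact rpow_le_rpow_of_exponent_le (by linarith) hfloor
    _ ≤ 2 ^ 5 * (l + m - 2) ^ m :=
        le_mul_of_one_le_left (rpow_nonneg (by linarith) m) (by norm_num)

/-- For all natural numbers `m ≥ 2` and `l ≥ 2`:
`Γ(l/2 + (m−1)/2) / (Γ((m−1)/2) · Γ(l/2 + 1)) ≤ 2^5 · (l+m−2)^m`. -/
theorem gamma_ratio_bound (m l : ℕ) (hm : 2 ≤ m) (hl : 2 ≤ l) :
    Real.Gamma ((l : ℝ)/2 + ((m : ℝ) - 1)/2)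
        / (Real.Gamma (((m : ℝ) - 1)/2) * Real.Gamma ((l : ℝ)/2 + 1))
      ≤ 2^5 * ((l : ℝ) + (m : ℝ) - 2)^m :=
  mod_cast gamma_ratio_bound_general (m := m) (l := l) (mod_cast hm) (mod_cast hl)
end

section
/- Let m ≥ 2 be an integer and t > 0. Then for every l ∈ ℕ and every u ∈ [−1,1]: |c_{m,l}^t(u)| ≤ e^{−l(l+m−1)t/2} · 2^7 · (l+m−2)^{m+1}, and c_{m,0}^t(u) = c_{m,1}^t(u) = 0. -/
/-- The Gegenbauer polynomials `C_l^α`, defined by the recurrence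
`C_0^α(u) = 1`, `C_1^α(u) = 2αu`, and
`C_l^α(u) = (2u(l+α−1)C_{l−1}^α(u) − (l+2α−2)C_{l−2}^α(u))/l` for `l ≥ 2`. -/
noncomputable def gegenbauer (α : ℝ) : ℕ → ℝ → ℝ
  | 0, _ => 1
  | 1, u => 2 * α * u
  | (l + 2), u =>
      (2 * u * (((l : ℝ) + 2) + α - 1) * gegenbauer α (l + 1) u
        - (((l : ℝ) + 2) + 2 * α - 2) * gegenbauer α l u) / ((l : ℝ) + 2)

/-- `c_{m,l}^t(u)`: the coefficient functions of the heat kernel expansion on `ℝP^m`,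
zero for `l` odd or `l = 0`. -/
noncomputable def cmt (m : ℕ) (t : ℝ) (l : ℕ) (u : ℝ) : ℝ :=
  if l % 2 = 0 ∧ l ≠ 0 then
    Real.exp (-((l : ℝ) * ((l : ℝ) + (m : ℝ) - 1)) * t / 2)
      * ((2 * (l : ℝ) + (m : ℝ) - 1) / ((m : ℝ) - 1))
      * gegenbauer (((m : ℝ) - 1) / 2) l u
  else 0

/-- `d_{m,n}^t(u) := Σ_{l=0}^n c_{m,l}^t(u)·c_{m,n−l}^t(u)` (Cauchy product coefficients). -/
noncomputable def dmt (m : ℕ) (t : ℝ) (n : ℕ) (u : ℝ) : ℝ :=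
  ∑ l ∈ Finset.range (n + 1), cmt m t l u * cmt m t (n - l) u

/-- `h_{m,k}^t(u) := Σ_{n=0}^k d_{m,n}^t(u)·c_{m,k−n}^t(u)` (triple Cauchy product coefficients). -/
noncomputable def hmt (m : ℕ) (t : ℝ) (k : ℕ) (u : ℝ) : ℝ :=
  ∑ n ∈ Finset.range (k + 1), dmt m t n u * cmt m t (k - n) u

/-!
The generating function `∑ C_n^α(cos θ) Xⁿ = (1 - 2 X cos θ + X²)^{-α}` factors as
`(1 - e^{iθ} X)^{-α} (1 - e^{-iθ} X)^{-α}`. Expanding both factors by the binomial series writes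
`C_n^α(cos θ)` as a combination of cosines, whose coefficients are nonnegative when `α ≥ 0`. Hence
`|C_n^α| ≤ C_n^α(1)` on `[-1, 1]`, and for `α = (k + 1) / 2` the value at `1` is the binomial
coefficient `(n + k).choose n ≤ (n + k)^k`.
-/

open PowerSeries Ring Finset

section Multichoose

variable {R : Type*} [CommRing R] [BinomialRing R]

lemma succ_mul_multichoose_succ (a : R) (n : ℕ) :
    ((n : R) + 1) * multichoose a (n + 1) = (a + n) * multichoose a n := by
  have := BinomialRing.toIsAddTorsionFree (R := R)
  apply nsmul_right_injective n.factorial_ne_zero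
  have h := factorial_nsmul_multichoose_eq_ascPochhammer a n
  have h_succ := factorial_nsmul_multichoose_eq_ascPochhammer a (n + 1)
  rw [Polynomial.ascPochhammer_smeval_eq_eval] at h h_succ
  rw [ascPochhammer_succ_eval, Nat.factorial_succ] at h_succ
  simp only [nsmul_eq_mul] at h h_succ ⊢
  push_cast at h_succ
  linear_combination h_succ - (a + n) * h

lemma multichoose_nonneg [LinearOrder R] [IsStrictOrderedRing R] {a : R} (ha : 0 ≤ a) (n : ℕ) :
    0 ≤ multichoose a n := by
  induction n with
  | zero => simp
  | succ n ih =>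
    have hn : 0 < (n : R) + 1 := by positivity
    refine nonneg_of_mul_nonneg_right ?_ hn
    rw [succ_mul_multichoose_succ]
    positivity

lemma multichoose_natCast_add_one (k n : ℕ) :
    multichoose ((k : R) + 1) n = ((n + k).choose n : R) := by
  rw [multichoose_eq, ← choose_natCast]
  congr 1
  push_cast
  ring

end Multichoose

section NegBinomialSeries

variable {R : Type*} [CommRing R] [BinomialRing R]

/-- The binomial series `(1 - z X)^{-a}` as a formal power series in `X`. The product of the series
for `z = e^{iθ}` and `z = e^{-iθ}` is the Gegenbauer generating function at `cos θ`. -/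
noncomputable def negBinomialSeries (a z : R) : R⟦X⟧ :=
  PowerSeries.mk fun n => multichoose a n * z ^ n

lemma coeff_negBinomialSeries (a z : R) (n : ℕ) :
    coeff n (negBinomialSeries a z) = multichoose a n * z ^ n :=
  coeff_mk _ _

lemma one_sub_mul_derivative_negBinomialSeries (a z : R) :
    (1 - C z * X) * derivative R (negBinomialSeries a z) = C (a * z) * negBinomialSeries a z := by
  ext n
  rw [sub_mul, one_mul, mul_assoc, map_sub, coeff_C_mul, coeff_C_mul]
  cases n with
  | zero => simp [coeff_derivative, coeff_negBinomialSeries]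
  | succ n =>
    have h := succ_mul_multichoose_succ a (n + 1)
    simp only [coeff_succ_X_mul, coeff_derivative, coeff_negBinomialSeries]
    push_cast at h ⊢
    linear_combination z ^ (n + 2) * h

lemma mul_derivative_negBinomialSeries_mul (a z w : R) :
    (1 - C (z + w) * X + C (z * w) * X ^ 2) *
        derivative R (negBinomialSeries a z * negBinomialSeries a w) =
      C a * (C (z + w) - C (2 * (z * w)) * X) *
        (negBinomialSeries a z * negBinomialSeries a w) := by
  have hz := one_sub_mul_derivative_negBinomialSeries a z
  have hw := one_sub_mul_derivative_negBinomialSeries a w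
  rw [Derivation.leibniz]
  simp only [smul_eq_mul, map_add, map_mul, map_ofNat] at hz hw ⊢
  linear_combination (1 - C w * X) * negBinomialSeries a w * hz +
    (1 - C z * X) * negBinomialSeries a z * hw

lemma coeff_negBinomialSeries_mul_recurrence (a z w : R) (n : ℕ) :
    ((n : R) + 2) * coeff (n + 2) (negBinomialSeries a z * negBinomialSeries a w) =
      (z + w) * (n + 1 + a) * coeff (n + 1) (negBinomialSeries a z * negBinomialSeries a w) -
        z * w * (n + 2 * a) * coeff n (negBinomialSeries a z * negBinomialSeries a w) := by
  have h := congrArg (coeff (n + 1)) (mul_derivative_negBinomialSeries_mul a z w)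
  simp only [add_mul, sub_mul, mul_sub, one_mul, mul_assoc, pow_two, map_add, map_sub, coeff_C_mul,
    coeff_succ_X_mul, coeff_derivative] at h
  cases n with
  | zero =>
    simp only [coeff_zero_X_mul] at h
    push_cast at h ⊢
    linear_combination h
  | succ n =>
    simp only [coeff_succ_X_mul, coeff_derivative] at h
    push_cast at h ⊢
    linear_combination h

end NegBinomialSeries

lemma gegenbauer_eq_coeff (α u : ℝ) {z w : ℂ} (hmul : z * w = 1) (hadd : z + w = 2 * u) (n : ℕ) :
    (gegenbauer α n u : ℂ) =
      coeff n (negBinomialSeries (α : ℂ) z * negBinomialSeries (α : ℂ) w) := by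
  induction n using Nat.twoStepInduction with
  | zero => simp [gegenbauer, coeff_mul, coeff_negBinomialSeries]
  | one =>
    have hcoeff : coeff 1 (negBinomialSeries (α : ℂ) z * negBinomialSeries (α : ℂ) w) =
        α * (z + w) := by
      rw [coeff_mul, Nat.sum_antidiagonal_succ, Nat.antidiagonal_zero, sum_singleton]
      simp only [coeff_negBinomialSeries, zero_add, multichoose_zero_right, multichoose_one_right,
        pow_zero, pow_one]
      ring
    rw [hcoeff, hadd, gegenbauer]
    push_cast
    ring
  | more n ih ih_succ =>
    have hn : (n : ℂ) + 2 ≠ 0 := by exact_mod_cast (n + 1).succ_ne_zero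
    apply mul_left_cancel₀ hn
    rw [coeff_negBinomialSeries_mul_recurrence, hmul, hadd, ← ih, ← ih_succ, gegenbauer]
    push_cast
    field_simp
    ring

theorem gegenbauer_cos (α θ : ℝ) (n : ℕ) :
    gegenbauer α n (Real.cos θ) =
      ∑ p ∈ antidiagonal n,
        multichoose α p.1 * multichoose α p.2 * Real.cos (((p.1 : ℝ) - p.2) * θ) := by
  have hmul : Complex.exp (θ * Complex.I) * Complex.exp (-θ * Complex.I) = 1 := by
    rw [← Complex.exp_add, neg_mul, add_neg_cancel, Complex.exp_zero]
  have hadd : Complex.exp (θ * Complex.I) + Complex.exp (-θ * Complex.I) = 2 * Real.cos θ := by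
    rw [Complex.ofReal_cos, Complex.two_cos]
  have hterm (i j : ℕ) :
      multichoose (α : ℂ) i * Complex.exp (θ * Complex.I) ^ i *
          (multichoose (α : ℂ) j * Complex.exp (-θ * Complex.I) ^ j) =
        ((multichoose α i * multichoose α j : ℝ) : ℂ) *
          Complex.exp (((((i : ℝ) - j) * θ : ℝ) : ℂ) * Complex.I) := by
    have hcast (k : ℕ) : ((multichoose α k : ℝ) : ℂ) = multichoose (α : ℂ) k :=
      map_multichoose Complex.ofRealHom α k
    rw [Complex.ofReal_mul, hcast, hcast, mul_mul_mul_comm, ← Complex.exp_nat_mul,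
      ← Complex.exp_nat_mul, ← Complex.exp_add]
    congr 2
    push_cast
    ring
  have h := congrArg Complex.re (gegenbauer_eq_coeff α (Real.cos θ) hmul hadd n)
  simpa only [coeff_mul, coeff_negBinomialSeries, hterm, Complex.re_sum, Complex.re_ofReal_mul,
    Complex.exp_ofReal_mul_I_re, Complex.ofReal_re] using h

lemma abs_gegenbauer_le_gegenbauer_one {α u : ℝ} (hα : 0 ≤ α) (hu : u ∈ Set.Icc (-1) 1) (n : ℕ) :
    |gegenbauer α n u| ≤ gegenbauer α n 1 := by
  rw [← Real.cos_arccos hu.1 hu.2, ← Real.cos_zero, gegenbauer_cos, gegenbauer_cos]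
  refine (abs_sum_le_sum_abs _ _).trans (sum_le_sum fun p _ => ?_)
  have hp : 0 ≤ multichoose α p.1 * multichoose α p.2 :=
    mul_nonneg (multichoose_nonneg hα _) (multichoose_nonneg hα _)
  rw [abs_mul, abs_of_nonneg hp, mul_zero, Real.cos_zero]
  exact mul_le_mul_of_nonneg_left (Real.abs_cos_le_one _) hp

lemma gegenbauer_one (α : ℝ) (n : ℕ) : gegenbauer α n 1 = multichoose (2 * α) n := by
  induction n using Nat.twoStepInduction with
  | zero => simp [gegenbauer]
  | one => simp [gegenbauer]
  | more n ih ih_succ =>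
    have h := succ_mul_multichoose_succ (2 * α) n
    have h_succ := succ_mul_multichoose_succ (2 * α) (n + 1)
    rw [gegenbauer, ih, ih_succ, div_eq_iff (by positivity)]
    push_cast at h_succ
    linear_combination h - h_succ

lemma abs_gegenbauer_add_one_div_two_le_choose (k n : ℕ) {u : ℝ} (hu : u ∈ Set.Icc (-1) 1) :
    |gegenbauer (((k : ℝ) + 1) / 2) n u| ≤ ((n + k).choose n : ℝ) := by
  have hα : (0 : ℝ) ≤ ((k : ℝ) + 1) / 2 := by positivity
  simpa only [gegenbauer_one, mul_div_cancel₀ _ (two_ne_zero' ℝ), multichoose_natCast_add_one]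
    using abs_gegenbauer_le_gegenbauer_one hα hu n

lemma two_mul_add_div_le {k l : ℕ} (hl : l ≠ 0) :
    (2 * (l : ℝ) + k + 1) / (k + 1) ≤ 3 * (l + k : ℕ) := by
  have hl' : (1 : ℝ) ≤ l := by exact_mod_cast Nat.one_le_iff_ne_zero.mpr hl
  refine (div_le_self (by positivity) (le_add_of_nonneg_left k.cast_nonneg)).trans ?_
  push_cast
  linarith [k.cast_nonneg (α := ℝ)]

lemma abs_cmt_add_two_le (k l : ℕ) (t : ℝ) {u : ℝ} (hu : u ∈ Set.Icc (-1) 1) :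
    |cmt (k + 2) t l u| ≤ Real.exp (-((l : ℝ) * ((l : ℝ) + (k + 2 : ℕ) - 1)) * t / 2) *
      (3 * ((l + k : ℕ) : ℝ) ^ (k + 1)) := by
  unfold cmt
  split_ifs with h
  · have hchoose : ((l + k).choose l : ℝ) ≤ ((l + k : ℕ) : ℝ) ^ k := by
      rw [Nat.choose_symm_add]
      exact_mod_cast Nat.choose_le_pow (l + k) k
    have hm : ((k + 2 : ℕ) : ℝ) - 1 = k + 1 := by push_cast; ring
    rw [mul_assoc, abs_mul, Real.abs_exp]
    gcongr
    rw [abs_mul, add_sub_assoc, hm, ← add_assoc, abs_of_nonneg (by positivity)]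
    calc (2 * (l : ℝ) + k + 1) / (k + 1) * |gegenbauer (((k : ℝ) + 1) / 2) l u|
      _ ≤ 3 * (l + k : ℕ) * ((l + k : ℕ) : ℝ) ^ k := by
          gcongr
          · exact two_mul_add_div_le h.2
          · exact (abs_gegenbauer_add_one_div_two_le_choose k l hu).trans hchoose
      _ = 3 * ((l + k : ℕ) : ℝ) ^ (k + 1) := by ring
  · rw [abs_zero]
    positivity

theorem cmt_bound_general (m : ℕ) (hm : 2 ≤ m) (t : ℝ) :
    (∀ l : ℕ, ∀ u ∈ Set.Icc (-1 : ℝ) 1,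
      |cmt m t l u| ≤ Real.exp (-((l : ℝ) * ((l : ℝ) + (m : ℝ) - 1)) * t / 2)
        * (3 * ((l : ℝ) + (m : ℝ) - 2) ^ (m - 1))) ∧
    (∀ u : ℝ, cmt m t 0 u = 0 ∧ cmt m t 1 u = 0) := by
  refine ⟨fun l u hu => ?_, fun u => by simp [cmt]⟩
  obtain ⟨k, rfl⟩ := Nat.exists_eq_add_of_le' hm
  have hbase : (l : ℝ) + ((k + 2 : ℕ) : ℝ) - 2 = ((l + k : ℕ) : ℝ) := by push_cast; ring
  simpa only [hbase, Nat.add_one_sub_one] using abs_cmt_add_two_le k l t hu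

lemma natCast_pow_le_pow_of_ne_zero {R : Type*} [Semiring R] [PartialOrder R]
    [IsStrictOrderedRing R] {a b : ℕ} (ha : a ≠ 0) (hab : a ≤ b) (n : ℕ) :
    (n : R) ^ a ≤ (n : R) ^ b := by
  rcases n.eq_zero_or_pos with rfl | hn
  · simp [ha, (Nat.pos_of_ne_zero ha).trans_le hab |>.ne']
  · exact pow_le_pow_right₀ (Nat.one_le_cast_iff_ne_zero.mpr hn.ne') hab

lemma three_mul_pow_pred_le {m : ℕ} (hm : 2 ≤ m) (l : ℕ) :
    3 * ((l : ℝ) + (m : ℝ) - 2) ^ (m - 1) ≤ 2 ^ 7 * ((l : ℝ) + (m : ℝ) - 2) ^ (m + 1) := by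
  have hbase : (l : ℝ) + m - 2 = ((l + m - 2 : ℕ) : ℝ) := by
    rw [Nat.cast_sub (by omega), Nat.cast_add, Nat.cast_ofNat]
  rw [hbase]
  exact mul_le_mul (by norm_num) (natCast_pow_le_pow_of_ne_zero (by omega) (by omega) _)
    (by positivity) (by norm_num)

/-- For an integer `m ≥ 2` and `t > 0`: for every `l ∈ ℕ` and `u ∈ [−1,1]`,
`|c_{m,l}^t(u)| ≤ e^{−l(l+m−1)t/2}·2^7·(l+m−2)^{m+1}`, and `c_{m,0}^t = c_{m,1}^t = 0`. -/
theorem cmt_bound (m : ℕ) (hm : 2 ≤ m) (t : ℝ) (ht : 0 < t) :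
    (∀ l : ℕ, ∀ u ∈ Set.Icc (-1 : ℝ) 1,
      |cmt m t l u| ≤ Real.exp (-((l : ℝ) * ((l : ℝ) + (m : ℝ) - 1)) * t / 2)
        * 2^7 * ((l : ℝ) + (m : ℝ) - 2)^(m + 1)) ∧
    (∀ u ∈ Set.Icc (-1 : ℝ) 1, cmt m t 0 u = 0 ∧ cmt m t 1 u = 0) := by
  have h := cmt_bound_general m hm t
  exact ⟨fun l u hu => (h.1 l u hu).trans (by grw [three_mul_pow_pred_le hm l, mul_assoc]),
    fun u _ => h.2 u⟩
end

section
/- Let m ≥ 2 be an integer. Then there exist t₀ > 0 and C > 0 such that for all t > t₀ and all u ∈ [−1,1]: 1 + Σ_{l=1}^∞ c_{m,l}^t(u) > 0, and | ln(1 + Σ_{l=1}^∞ c_{m,l}^t(u)) − Σ_{l=2}^∞ c_{m,l}^t(u) + (1/2)·Σ_{n=4}^∞ d_{m,n}^t(u) | ≤ C · | Σ_{k=6}^∞ h_{m,k}^t(u) |. -/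
/-!
Put `S = ∑ c_l`. Since `c_0 = c_1 = 0`, the sums over `l ≥ 1` and `l ≥ 2` both equal `S`, and
`d` and `h`, being Cauchy products, start at the indices `4` and `6` and sum to `S ^ 2` and `S ^ 3`.
The claim is thus the bound `2 * |S| ^ 3` for the error of the second order Taylor polynomial of
`log (1 + S)`, valid for `|S| ≤ 1 / 2`. On `[-1, 1]` the Gegenbauer polynomials grow at most
geometrically in `l`, so that `|c_l| ≤ q ^ l` with a ratio `q` that does not depend on `u` and
tends to `0` as `t → ∞`, and therefore `|S| ≤ 1 / 2` for all large `t`.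
-/

theorem sum_range_mul_eq_zero_of_lt {R : Type*} [NonUnitalNonAssocSemiring R] {a b : ℕ → R}
    {i j n : ℕ} (ha : ∀ l < i, a l = 0) (hb : ∀ l < j, b l = 0) (hn : n < i + j) :
    ∑ l ∈ Finset.range (n + 1), a l * b (n - l) = 0 := by
  refine Finset.sum_eq_zero fun l hmem ↦ ?_
  have hln : l < n + 1 := Finset.mem_range.1 hmem
  rcases lt_or_ge l i with hl | hl
  · rw [ha l hl, zero_mul]
  · rw [hb (n - l) (by omega), mul_zero]

theorem tsum_nat_add_eq_tsum {M : Type*} [AddCommMonoid M] [TopologicalSpace M] {a : ℕ → M}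
    {k : ℕ} (ha : ∀ l < k, a l = 0) : ∑' l, a (l + k) = ∑' l, a l := by
  refine (add_left_injective k).tsum_eq fun l hl ↦ ⟨l - k, Nat.sub_add_cancel ?_⟩
  exact not_lt.1 fun hlk ↦ hl (ha l hlk)

theorem norm_tsum_le_of_norm_le_pow {E : Type*} [SeminormedAddCommGroup E] {a : ℕ → E} {q : ℝ}
    {k : ℕ} (hq₀ : 0 ≤ q) (hq₁ : q < 1) (ha : ∀ l < k, a l = 0) (haq : ∀ l, ‖a l‖ ≤ q ^ l) :
    ‖∑' l, a l‖ ≤ q ^ k / (1 - q) := by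
  rw [← tsum_nat_add_eq_tsum ha, div_eq_mul_inv]
  refine tsum_of_norm_bounded ((hasSum_geometric_of_lt_one hq₀ hq₁).mul_left (q ^ k)) fun l ↦ ?_
  rw [← pow_add, add_comm k]
  exact haq (l + k)

theorem abs_log_one_add_sub_add_sq_div_two_le {x : ℝ} (hx : |x| < 1) :
    |Real.log (1 + x) - x + x ^ 2 / 2| ≤ |x| ^ 3 / (1 - |x|) := by
  have h := Real.abs_log_sub_add_sum_range_le (x := -x) (by rwa [abs_neg]) 2
  rw [abs_neg, sub_neg_eq_add] at h
  convert h using 2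
  norm_num [Finset.sum_range_succ]
  ring

theorem abs_log_one_add_sub_add_sq_div_two_le_of_abs_le_half {x : ℝ} (hx : |x| ≤ 1 / 2) :
    |Real.log (1 + x) - x + x ^ 2 / 2| ≤ 2 * |x| ^ 3 :=
  calc |Real.log (1 + x) - x + x ^ 2 / 2|
    _ ≤ |x| ^ 3 / (1 - |x|) := abs_log_one_add_sub_add_sq_div_two_le (by linarith)
    _ ≤ |x| ^ 3 / (1 / 2) := by gcongr; linarith
    _ = 2 * |x| ^ 3 := by ring

theorem abs_gegenbauer_add_two_le {α u : ℝ} (hα : 0 ≤ α) (hu : |u| ≤ 1) (l : ℕ) :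
    |gegenbauer α (l + 2) u| ≤
      (2 * (l + 1 + α) * |gegenbauer α (l + 1) u| + (l + 2 * α) * |gegenbauer α l u|) /
        (l + 2) := by
  have hrec : gegenbauer α (l + 2) u =
      (u * (2 * (l + 1 + α) * gegenbauer α (l + 1) u) - (l + 2 * α) * gegenbauer α l u) /
        (l + 2) := by
    rw [gegenbauer]
    ring
  rw [hrec, abs_div, abs_of_pos (by positivity : (0 : ℝ) < l + 2)]
  gcongr
  refine (abs_sub _ _).trans ?_
  rw [abs_mul u, abs_mul, abs_mul _ (gegenbauer α l u),
    abs_of_nonneg (by positivity : 0 ≤ 2 * (l + 1 + α)),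
    abs_of_nonneg (by positivity : 0 ≤ l + 2 * α)]
  gcongr ?_ + _
  exact mul_le_of_le_one_left (by positivity) hu

theorem abs_gegenbauer_le_pow {α u : ℝ} (hα : 0 ≤ α) (hu : |u| ≤ 1) (l : ℕ) :
    |gegenbauer α l u| ≤ (2 * α + 3) ^ l := by
  induction l using Nat.twoStepInduction with
  | zero => simp [gegenbauer]
  | one =>
    rw [gegenbauer, abs_mul, abs_of_nonneg (by positivity), pow_one]
    nlinarith
  | more l ih₀ ih₁ =>
    have hK : 2 * (l + 1 + α) * (2 * α + 3) + (l + 2 * α) ≤ (2 * α + 3) ^ 2 * (l + 2) := by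
      have : 0 ≤ l * α := by positivity
      have : 0 ≤ l * α ^ 2 := by positivity
      nlinarith
    refine (abs_gegenbauer_add_two_le hα hu l).trans ((div_le_iff₀ (by positivity)).2 ?_)
    calc 2 * (l + 1 + α) * |gegenbauer α (l + 1) u| + (l + 2 * α) * |gegenbauer α l u|
      _ ≤ 2 * (l + 1 + α) * (2 * α + 3) ^ (l + 1) + (l + 2 * α) * (2 * α + 3) ^ l := by gcongr
      _ = (2 * α + 3) ^ l * (2 * (l + 1 + α) * (2 * α + 3) + (l + 2 * α)) := by ring
      _ ≤ (2 * α + 3) ^ l * ((2 * α + 3) ^ 2 * (l + 2)) := by gcongr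
      _ = (2 * α + 3) ^ (l + 2) * (l + 2) := by ring

/-- The ratio `q` of the geometric majorant `|c_{m,l}^t(u)| ≤ q ^ l` on `[-1, 1]` for `t ≥ 0`.
The three factors to the power `l` dominate those in the definition of `c_{m,l}^t`, in that order;
`m + 2` is `2 * α + 3` at the Gegenbauer parameter `α = (m - 1) / 2`. -/
noncomputable def cmtRatio (m : ℕ) (t : ℝ) : ℝ :=
  Real.exp (-t / 2) * 3 * (m + 2)

theorem cmtRatio_nonneg (m : ℕ) (t : ℝ) : 0 ≤ cmtRatio m t := by
  unfold cmtRatio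
  positivity

theorem tendsto_cmtRatio_atTop (m : ℕ) :
    Filter.Tendsto (cmtRatio m) Filter.atTop (nhds 0) := by
  have hexp : Filter.Tendsto (fun t : ℝ ↦ Real.exp (-t / 2)) Filter.atTop (nhds 0) :=
    Real.tendsto_exp_atBot.comp
      (Filter.tendsto_neg_atTop_atBot.atBot_div_const two_pos)
  unfold cmtRatio
  simpa only [zero_mul] using (hexp.mul_const 3).mul_const ((m : ℝ) + 2)

section Coefficients

variable {m : ℕ} {t u : ℝ}

theorem abs_cmt_le_cmtRatio_pow (hm : 2 ≤ m) (ht : 0 ≤ t) (hu : |u| ≤ 1) (l : ℕ) :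
    |cmt m t l u| ≤ cmtRatio m t ^ l := by
  have hm' : (2 : ℝ) ≤ m := mod_cast hm
  unfold cmt
  split_ifs
  · have hexp : Real.exp (-(l * (l + m - 1)) * t / 2) ≤ Real.exp (-t / 2) ^ l := by
      rw [← Real.exp_nat_mul, Real.exp_le_exp]
      have : 0 ≤ l * t * (l + (m - 2)) :=
        mul_nonneg (by positivity) (add_nonneg l.cast_nonneg (sub_nonneg.2 hm'))
      linarith
    have hcoeff : |(2 * l + m - 1) / (m - 1 : ℝ)| ≤ 3 ^ l := by
      have hbernoulli : 1 + l * 2 ≤ (3 : ℝ) ^ l :=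
        (one_add_mul_le_pow (by norm_num) l).trans_eq (by norm_num)
      rw [abs_of_nonneg (div_nonneg (by linarith) (by linarith)), div_le_iff₀ (by linarith)]
      nlinarith
    have hgegenbauer : |gegenbauer ((m - 1) / 2) l u| ≤ (m + 2 : ℝ) ^ l := by
      convert abs_gegenbauer_le_pow (α := (m - 1) / 2) (by linarith) hu l using 2
      ring
    rw [abs_mul, abs_mul, Real.abs_exp, cmtRatio, mul_pow, mul_pow]
    gcongr
  · rw [abs_zero]
    exact pow_nonneg (cmtRatio_nonneg m t) l

theorem summable_norm_cmt (hm : 2 ≤ m) (ht : 0 ≤ t) (hu : |u| ≤ 1) (hq : cmtRatio m t < 1) :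
    Summable fun l ↦ ‖cmt m t l u‖ :=
  .of_nonneg_of_le (fun _ ↦ norm_nonneg _) (abs_cmt_le_cmtRatio_pow hm ht hu)
    (summable_geometric_of_lt_one (cmtRatio_nonneg m t) hq)

theorem cmt_eq_zero_of_lt_two {l : ℕ} (hl : l < 2) : cmt m t l u = 0 :=
  if_neg (by omega)

theorem abs_tsum_cmt_le (hm : 2 ≤ m) (ht : 0 ≤ t) (hu : |u| ≤ 1) (hq : cmtRatio m t < 1) :
    |∑' l, cmt m t l u| ≤ cmtRatio m t ^ 2 / (1 - cmtRatio m t) :=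
  norm_tsum_le_of_norm_le_pow (cmtRatio_nonneg m t) hq (fun _ ↦ cmt_eq_zero_of_lt_two)
    (abs_cmt_le_cmtRatio_pow hm ht hu)

theorem abs_tsum_cmt_le_half (hm : 2 ≤ m) (ht : 0 ≤ t) (hu : |u| ≤ 1)
    (hq : cmtRatio m t ≤ 1 / 2) : |∑' l, cmt m t l u| ≤ 1 / 2 := by
  refine (abs_tsum_cmt_le hm ht hu (by linarith)).trans ((div_le_iff₀ (by linarith)).2 ?_)
  nlinarith [cmtRatio_nonneg m t]

theorem dmt_eq_zero_of_lt_four {n : ℕ} (hn : n < 4) : dmt m t n u = 0 :=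
  sum_range_mul_eq_zero_of_lt (i := 2) (j := 2) (fun _ ↦ cmt_eq_zero_of_lt_two)
    (fun _ ↦ cmt_eq_zero_of_lt_two) hn

theorem hmt_eq_zero_of_lt_six {k : ℕ} (hk : k < 6) : hmt m t k u = 0 :=
  sum_range_mul_eq_zero_of_lt (i := 4) (j := 2) (fun _ ↦ dmt_eq_zero_of_lt_four)
    (fun _ ↦ cmt_eq_zero_of_lt_two) hk

theorem tsum_cmt_nat_add {k : ℕ} (hk : k ≤ 2) : ∑' l, cmt m t (l + k) u = ∑' l, cmt m t l u :=
  tsum_nat_add_eq_tsum fun _ hl ↦ cmt_eq_zero_of_lt_two (hl.trans_le hk)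

theorem tsum_dmt_nat_add {k : ℕ} (hk : k ≤ 4) : ∑' n, dmt m t (n + k) u = ∑' n, dmt m t n u :=
  tsum_nat_add_eq_tsum fun _ hn ↦ dmt_eq_zero_of_lt_four (hn.trans_le hk)

theorem tsum_hmt_nat_add {k : ℕ} (hk : k ≤ 6) : ∑' n, hmt m t (n + k) u = ∑' n, hmt m t n u :=
  tsum_nat_add_eq_tsum fun _ hn ↦ hmt_eq_zero_of_lt_six (hn.trans_le hk)

theorem summable_norm_dmt (hc : Summable fun l ↦ ‖cmt m t l u‖) :
    Summable fun n ↦ ‖dmt m t n u‖ := by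
  simpa only [dmt] using summable_norm_sum_mul_range_of_summable_norm hc hc

theorem tsum_dmt (hc : Summable fun l ↦ ‖cmt m t l u‖) :
    ∑' n, dmt m t n u = (∑' l, cmt m t l u) ^ 2 := by
  simp only [dmt]
  rw [sq, tsum_mul_tsum_eq_tsum_sum_range_of_summable_norm hc hc]

theorem tsum_hmt (hc : Summable fun l ↦ ‖cmt m t l u‖) :
    ∑' k, hmt m t k u = (∑' l, cmt m t l u) ^ 3 := by
  simp only [hmt]
  rw [pow_succ, ← tsum_dmt hc,
    tsum_mul_tsum_eq_tsum_sum_range_of_summable_norm (summable_norm_dmt hc) hc]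

end Coefficients

/-- For `m ≥ 2` there are `t₀ > 0` and `C > 0` such that for all `t > t₀` and `u ∈ [−1,1]`:
`1 + Σ_{l=1}^∞ c_{m,l}^t(u) > 0` and
`|ln(1 + Σ_{l=1}^∞ c_{m,l}^t(u)) − Σ_{l=2}^∞ c_{m,l}^t(u) + (1/2)Σ_{n=4}^∞ d_{m,n}^t(u)|
  ≤ C·|Σ_{k=6}^∞ h_{m,k}^t(u)|`. -/
theorem log_taylor_expansion (m : ℕ) (hm : 2 ≤ m) :
    ∃ t₀ > (0 : ℝ), ∃ C > (0 : ℝ), ∀ t > t₀, ∀ u ∈ Set.Icc (-1 : ℝ) 1,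
      0 < 1 + ∑' l : ℕ, cmt m t (l + 1) u ∧
      |Real.log (1 + ∑' l : ℕ, cmt m t (l + 1) u)
          - (∑' l : ℕ, cmt m t (l + 2) u)
          + (1/2) * ∑' n : ℕ, dmt m t (n + 4) u|
        ≤ C * |∑' k : ℕ, hmt m t (k + 6) u| := by
  have hsmall : ∀ᶠ t in Filter.atTop, cmtRatio m t ≤ 1 / 2 :=
    (tendsto_cmtRatio_atTop m).eventually_le_const one_half_pos
  obtain ⟨t₀, hratio, ht₀⟩ :=
    ((Filter.eventually_forall_ge_atTop.2 hsmall).and (Filter.eventually_gt_atTop 0)).exists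
  refine ⟨t₀, ht₀, 2, two_pos, fun t ht u hu ↦ ?_⟩
  have hq : cmtRatio m t ≤ 1 / 2 := hratio t ht.le
  have hc : Summable fun l ↦ ‖cmt m t l u‖ :=
    summable_norm_cmt hm (ht₀.trans ht).le (abs_le.2 hu) (by linarith)
  have hS : |∑' l, cmt m t l u| ≤ 1 / 2 :=
    abs_tsum_cmt_le_half hm (ht₀.trans ht).le (abs_le.2 hu) hq
  rw [tsum_cmt_nat_add one_le_two, tsum_cmt_nat_add le_rfl, tsum_dmt_nat_add le_rfl,
    tsum_hmt_nat_add le_rfl, tsum_dmt hc, tsum_hmt hc, abs_pow, one_div_mul_eq_div]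
  exact ⟨by linarith [neg_le_of_abs_le hS], abs_log_one_add_sub_add_sq_div_two_le_of_abs_le_half hS⟩
end

section
/- For every integer m ≥ 1 and all x, y ∈ ℝ^{m+1}: ‖F_m(x,x) − F_m(y,y)‖² = −4⟨x,y⟩² + (2/(m(m+1)))·( m²‖x‖⁴ + m²‖y‖⁴ + 2m‖x‖²‖y‖² ). -/
open RealInnerProductSpace

/-- Dimension of the target of `F_{k+1}`: `dimF k = (k+1)(k+4)/2`. -/
def dimF : ℕ → ℕ
  | 0 => 2
  | (k + 1) => dimF k + (k + 3)

/-- The recursively defined maps `F_{k+1} : ℝ^{k+2} × ℝ^{k+2} → ℝ^{(k+1)(k+4)/2}`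
(indexed so that `F k` is the map called `F_{k+1}` in the paper, i.e. `F_m = F (m-1)`):
`F_1((x₁,x₂),(y₁,y₂)) = (x₁y₁ − x₂y₂, x₁y₂ + x₂y₁)` and
`F_{m+1}((x,x_{m+2}),(y,y_{m+2}))
  = (F_m(x,y), x_{m+2}y + y_{m+2}x, τ_{m+1}(⟨x,y⟩ − (m+1)x_{m+2}y_{m+2}))`
with `τ_{m+1} = √(2/((m+1)(m+2)))`. -/
noncomputable def F : (k : ℕ) → (Fin (k + 2) → ℝ) → (Fin (k + 2) → ℝ) → (Fin (dimF k) → ℝ)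
  | 0, x, y => ![x 0 * y 0 - x 1 * y 1, x 0 * y 1 + x 1 * y 0]
  | (k + 1), x, y =>
      Fin.append (m := dimF k + (k + 2)) (n := 1)
        (Fin.append
          (F k (fun i => x i.castSucc) (fun i => y i.castSucc))
          (fun i : Fin (k + 2) =>
            x (Fin.last (k + 2)) * y i.castSucc + y (Fin.last (k + 2)) * x i.castSucc))
        (fun _ : Fin 1 =>
          Real.sqrt (2 / (((k : ℝ) + 2) * ((k : ℝ) + 3))) *
            ((∑ i : Fin (k + 2), x i.castSucc * y i.castSucc)
              - ((k : ℝ) + 2) * x (Fin.last (k + 2)) * y (Fin.last (k + 2))))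

/-- The canonical identification of `Fin n → ℝ` with Euclidean space (used for norms
and inner products). -/
noncomputable def toE {n : ℕ} (v : Fin n → ℝ) : EuclideanSpace ℝ (Fin n) :=
  (EuclideanSpace.equiv (Fin n) ℝ).symm v

/-! Up to the factor `√2`, `F_m(x, y)` lists the coordinates, in an orthonormal basis, of the
trace-free part of the symmetrization of `x ⊗ y`. Inner products of such tensors are determined by
those of the vectors:
`⟪F_m(x, y), F_m(z, w)⟫ = ⟪x, z⟫⟪y, w⟫ + ⟪x, w⟫⟪y, z⟫ - 2/(m+1) ⟪x, y⟫⟪z, w⟫`.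
Induction on the dimension gives this identity from the recursion. Its diagonal case `x = y`,
`z = w` and the expansion of `‖u - v‖²` give the distance formula. -/

theorem dotProduct_fin_append {R : Type*} [Mul R] [AddCommMonoid R] {m n : ℕ}
    (u u' : Fin m → R) (v v' : Fin n → R) :
    Fin.append u v ⬝ᵥ Fin.append u' v' = u ⬝ᵥ u' + v ⬝ᵥ v' := by
  simp only [dotProduct, Fin.sum_univ_add, Fin.append_left, Fin.append_right]

theorem dotProduct_eq_init_add_last {R : Type*} [Mul R] [AddCommMonoid R] {n : ℕ}
    (u v : Fin (n + 1) → R) :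
    u ⬝ᵥ v = Fin.init u ⬝ᵥ Fin.init v + u (Fin.last n) * v (Fin.last n) :=
  Fin.sum_univ_castSucc _

theorem smul_add_smul_dotProduct_smul_add_smul {ι R : Type*} [Fintype ι] [CommSemiring R]
    (a b c d : R) (u v u' v' : ι → R) :
    (a • u + b • v) ⬝ᵥ (c • u' + d • v')
      = a * c * (u ⬝ᵥ u') + a * d * (u ⬝ᵥ v') + b * c * (v ⬝ᵥ u') + b * d * (v ⬝ᵥ v') := by
  simp only [add_dotProduct, dotProduct_add, smul_dotProduct, dotProduct_smul, smul_eq_mul]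
  ring

theorem F_succ (k : ℕ) (x y : Fin (k + 3) → ℝ) :
    F (k + 1) x y =
      Fin.append (m := dimF k + (k + 2)) (n := 1)
        (Fin.append (F k (Fin.init x) (Fin.init y))
          (x (Fin.last (k + 2)) • Fin.init y + y (Fin.last (k + 2)) • Fin.init x))
        ![√(2 / ((k + 2) * (k + 3))) *
          (Fin.init x ⬝ᵥ Fin.init y - (k + 2) * x (Fin.last (k + 2)) * y (Fin.last (k + 2)))] := by
  simp only [Matrix.vec_single_eq_const]
  rfl

theorem F_zero_dotProduct_F_zero (x y z w : Fin 2 → ℝ) :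
    F 0 x y ⬝ᵥ F 0 z w
      = (x ⬝ᵥ z) * (y ⬝ᵥ w) + (x ⬝ᵥ w) * (y ⬝ᵥ z) - (x ⬝ᵥ y) * (z ⬝ᵥ w) := by
  change ![x 0 * y 0 - x 1 * y 1, x 0 * y 1 + x 1 * y 0] ⬝ᵥ
    ![z 0 * w 0 - z 1 * w 1, z 0 * w 1 + z 1 * w 0] = _
  simp only [dotProduct, Fin.sum_univ_two, Matrix.cons_val_zero, Matrix.cons_val_one]
  ring

theorem F_succ_dotProduct_F_succ (k : ℕ) (x y z w : Fin (k + 3) → ℝ) :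
    F (k + 1) x y ⬝ᵥ F (k + 1) z w
      = F k (Fin.init x) (Fin.init y) ⬝ᵥ F k (Fin.init z) (Fin.init w)
        + (x (Fin.last _) • Fin.init y + y (Fin.last _) • Fin.init x) ⬝ᵥ
            (z (Fin.last _) • Fin.init w + w (Fin.last _) • Fin.init z)
        + 2 / ((k + 2) * (k + 3))
          * (Fin.init x ⬝ᵥ Fin.init y - (k + 2) * x (Fin.last _) * y (Fin.last _))
          * (Fin.init z ⬝ᵥ Fin.init w - (k + 2) * z (Fin.last _) * w (Fin.last _)) := by
  have sq_scale : √(2 / ((k + 2) * (k + 3)) : ℝ) ^ 2 = 2 / ((k + 2) * (k + 3)) :=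
    Real.sq_sqrt (by positivity)
  rw [F_succ, F_succ]
  -- `rw` fails here: `dimF (k + 1)` is a sum only up to unfolding.
  refine (dotProduct_fin_append _ _ _ _).trans ?_
  rw [dotProduct_fin_append, Matrix.cons_dotProduct_cons, Matrix.dotProduct_of_isEmpty ![],
    add_zero, mul_mul_mul_comm, ← pow_two, sq_scale, ← mul_assoc]

theorem F_dotProduct_F (k : ℕ) (x y z w : Fin (k + 2) → ℝ) :
    F k x y ⬝ᵥ F k z w
      = (x ⬝ᵥ z) * (y ⬝ᵥ w) + (x ⬝ᵥ w) * (y ⬝ᵥ z) - 2 / (k + 2) * (x ⬝ᵥ y) * (z ⬝ᵥ w) := by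
  induction k with
  | zero =>
    have trace_coeff_eq_one : 2 / (((0 : ℕ) : ℝ) + 2) = 1 := by norm_num
    rw [F_zero_dotProduct_F_zero, trace_coeff_eq_one, one_mul]
  | succ k ih =>
    rw [F_succ_dotProduct_F_succ, ih, smul_add_smul_dotProduct_smul_add_smul]
    simp only [dotProduct_eq_init_add_last (n := k + 2)]
    push_cast
    field_simp
    ring

theorem inner_toE {n : ℕ} (u v : Fin n → ℝ) : ⟪toE u, toE v⟫ = u ⬝ᵥ v := by
  rw [dotProduct_comm]
  rfl

theorem inner_toE_F (k : ℕ) (x y z w : Fin (k + 2) → ℝ) :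
    ⟪toE (F k x y), toE (F k z w)⟫
      = ⟪toE x, toE z⟫ * ⟪toE y, toE w⟫ + ⟪toE x, toE w⟫ * ⟪toE y, toE z⟫
        - 2 / (k + 2) * ⟪toE x, toE y⟫ * ⟪toE z, toE w⟫ := by
  simp only [inner_toE, F_dotProduct_F]

/-- For every integer `m ≥ 1` (here `m = k+1`) and all `x, y ∈ ℝ^{m+1}`:
`‖F_m(x,x) − F_m(y,y)‖² = −4⟨x,y⟩² + (2/(m(m+1)))(m²‖x‖⁴ + m²‖y‖⁴ + 2m‖x‖²‖y‖²)`. -/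
theorem norm_sq_F_diff (k : ℕ) (x y : Fin (k + 2) → ℝ) :
    ‖toE (F k x x) - toE (F k y y)‖^2
      = -4 * ⟪toE x, toE y⟫^2
        + (2 / (((k : ℝ) + 1) * ((k : ℝ) + 2)))
          * (((k : ℝ) + 1)^2 * ‖toE x‖^4 + ((k : ℝ) + 1)^2 * ‖toE y‖^4
            + 2 * ((k : ℝ) + 1) * ‖toE x‖^2 * ‖toE y‖^2) := by
  have inner_diag (u v : Fin (k + 2) → ℝ) : ⟪toE (F k u u), toE (F k v v)⟫
      = 2 * ⟪toE u, toE v⟫ ^ 2 - 2 / (k + 2) * ‖toE u‖ ^ 2 * ‖toE v‖ ^ 2 := by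
    rw [inner_toE_F, real_inner_self_eq_norm_sq, real_inner_self_eq_norm_sq]
    ring
  have norm_sq_diag (u : Fin (k + 2) → ℝ) :
      ‖toE (F k u u)‖ ^ 2 = 2 * (k + 1) / (k + 2) * ‖toE u‖ ^ 4 := by
    rw [← real_inner_self_eq_norm_sq, inner_diag, real_inner_self_eq_norm_sq]
    field_simp
    ring
  rw [norm_sub_sq_real, norm_sq_diag, norm_sq_diag, inner_diag]
  field_simp
  ring
end
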